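/- Let K be a finite field of characteristic p with [K : F_p] even, so |K| = q^2 for the order q of the subfield of index 2, and let d be an integer with gcd(d, |K| − 1) = 1. If d ≡ p^j (mod q − 1) for some nonnegative integer j (i.e., d is a Niho exponent, a power of p modulo sqrt(|K|) − 1), then the set {W_{K,d}(a) : a ∈ K^×} does not have exactly 3 elements. -/

import Mathlib

open scoped BigOperators Classical

/-- The canonical additive character of a finite field `K` of characteristic `p`:
`ψ_K(x) = exp(2πi · Tr_{K/F_p}(x) / p)`, where `Tr_{K/F_p}` is the absolute trace. -/
noncomputable def canonicalAddChar (p : ℕ) [Fact p.Prime] (K : Type) [Field K] [Fintype K]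
    [Algebra (ZMod p) K] (x : K) : ℂ :=
  Complex.exp (2 * Real.pi * Complex.I * ((Algebra.trace (ZMod p) K x).val : ℂ) / (p : ℂ))

/-- The Weil sum `W_{K,d}(a) = ∑_{x ∈ K} ψ_K(x^d + a·x)`. -/
noncomputable def weilSum (p : ℕ) [Fact p.Prime] (K : Type) [Field K] [Fintype K]
    [Algebra (ZMod p) K] (d : ℤ) (a : K) : ℂ :=
  ∑ x : K, canonicalAddChar p K (x ^ d + a * x)

/-- The value set `{W_{K,d}(a) : a ∈ K^×}` of the Weil sum. -/
noncomputable def weilValues (p : ℕ) [Fact p.Prime] (K : Type) [Field K] [Fintype K]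
    [Algebra (ZMod p) K] (d : ℤ) : Set ℂ :=
  {w : ℂ | ∃ a : K, a ≠ 0 ∧ weilSum p K d a = w}

/-- `d` is degenerate over a finite field of order `q` and characteristic `p` if
`d ≡ p^j (mod q − 1)` for some nonnegative integer `j`. -/
def IsDegenerate (p : ℕ) (q : ℕ) (d : ℤ) : Prop :=
  ∃ j : ℕ, d ≡ (p : ℤ) ^ j [ZMOD (q : ℤ) - 1]

/-!
After multiplying `d` by a power of `p`, which changes no Weil sum, `d = 1 + s (q - 1)`. By a
theorem of Niho, `W(a) = q (N(a) - 1)`, where `N(a)` counts the `u` with `u ^ (q + 1) = 1` and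
`u ^ s + u ^ (1 - s) + a + a ^ q u = 0`. These equations define `q + 1` pairwise non-parallel lines
of `K`, the affine plane over its subfield of order `q`. Double counting gives `∑ W = q ^ 2` and
`∑ W ^ 2 = q ^ 4`, so that three values can only be `-q`, `0` and `q m` with `m > 1`; then `m`
divides `N - 1` at every point of a line, and `m` divides `q` because `N - 1` sums to `q` on a line.

Modulo `p`, this says that on each line the sum of any function over the crossings with the other
lines is zero. For the power `q - 1` and every line, this makes all monomials of degree `q - 1` in
the two coordinates of the crossings sum to zero. There are `q` crossings on a line, so a product of
`q - 1` linear forms isolates any one of them and shows that its coordinates are proportional to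
those of another one. Conjugation then forces one of the two coordinates to vanish, which means
that all lines pass through `-1`. But then `N - 1` takes only two values.
-/

open Finset

section Counting

theorem card_fiber_eq_of_mapsTo {α β : Type*} {s : Finset α} {t : Finset β} {f : α → β} {m n : ℕ}
    (hf : Set.MapsTo f s t) (ht : #t ≤ m) (hfiber : ∀ b ∈ t, #{a ∈ s | f a = b} ≤ n)
    (hs : m * n ≤ #s) : ∀ b ∈ t, #{a ∈ s | f a = b} = n := by
  refine (sum_eq_sum_iff_of_le hfiber).1 (le_antisymm (sum_le_sum hfiber) ?_)
  rw [← card_eq_sum_card_fiberwise hf, sum_const, smul_eq_mul]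
  exact (Nat.mul_le_mul_right n ht).trans hs

end Counting

section CrossingLines

/-- A family of `q + 1` lines of `q` points each in a plane of `q ^ 2` points, any two of which
cross in exactly one point: the incidence structure formed by one line from each parallel class
of an affine plane of order `q`. Values of `line` and `meet` outside `index`, and the points
`meet u u`, carry no information. -/
structure CrossingLines (q : ℕ) (α ι : Type*) [Fintype α] where
  index : Finset ι
  line : ι → Finset α
  meet : ι → ι → α
  card_points : Fintype.card α = q ^ 2
  card_index : #index = q + 1
  card_line : ∀ u ∈ index, #(line u) = q
  mem_line_and_mem_line_iff : ∀ u ∈ index, ∀ v ∈ index, u ≠ v →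
    ∀ a, a ∈ line u ∧ a ∈ line v ↔ a = meet u v

namespace CrossingLines

variable {q : ℕ} {α ι : Type*} [Fintype α] (L : CrossingLines q α ι)

/-- One less than the number of lines through `a`; the value at `a` of the Weil sum of a Niho
exponent is `q` times this number. -/
noncomputable def excess (a : α) : ℤ := #{u ∈ L.index | a ∈ L.line u} - 1

theorem neg_one_le_excess (a : α) : -1 ≤ L.excess a := by
  unfold excess
  omega

variable {L} {v : ι}

theorem excess_eq_card_of_mem_line (hv : v ∈ L.index) {a : α} (ha : a ∈ L.line v) :
    L.excess a = #{u ∈ L.index.erase v | a ∈ L.line u} := by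
  rw [excess, filter_erase, ← card_erase_add_one (mem_filter.2 ⟨hv, ha⟩)]
  push_cast
  ring

theorem sum_line_excess_mul {R : Type*} [CommRing R] (hv : v ∈ L.index) (g : α → R) :
    ∑ a ∈ L.line v, (L.excess a : R) * g a = ∑ u ∈ L.index.erase v, g (L.meet u v) := by
  calc
    ∑ a ∈ L.line v, (L.excess a : R) * g a
        = ∑ a ∈ L.line v, ∑ u ∈ L.index.erase v with a ∈ L.line u, g a :=
      sum_congr rfl fun a ha ↦ by simp [excess_eq_card_of_mem_line hv ha]
    _ = ∑ u ∈ L.index.erase v, ∑ a ∈ {L.meet u v}, g a := sum_comm' fun a u ↦ by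
      simp only [mem_filter, mem_erase, mem_singleton]
      constructor
      · rintro ⟨hav, ⟨huv, hu⟩, hau⟩
        exact ⟨(L.mem_line_and_mem_line_iff u hu v hv huv a).1 ⟨hau, hav⟩, huv, hu⟩
      · rintro ⟨ha, huv, hu⟩
        obtain ⟨hau, hav⟩ := (L.mem_line_and_mem_line_iff u hu v hv huv a).2 ha
        exact ⟨hav, ⟨huv, hu⟩, hau⟩
    _ = ∑ u ∈ L.index.erase v, g (L.meet u v) := by simp

theorem sum_line_excess (hv : v ∈ L.index) : ∑ a ∈ L.line v, L.excess a = q := by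
  simpa [card_erase_of_mem hv, L.card_index] using sum_line_excess_mul hv fun _ ↦ (1 : ℤ)

variable (L)

theorem sum_excess_add_one_mul (g : α → ℤ) :
    ∑ a, (L.excess a + 1) * g a = ∑ v ∈ L.index, ∑ a ∈ L.line v, g a := by
  rw [sum_comm' (t' := univ) (s' := fun a ↦ {v ∈ L.index | a ∈ L.line v}) (by simp)]
  simp [excess]

theorem sum_excess : ∑ a, L.excess a = q := by
  have hline : ∀ v ∈ L.index, ∑ _ ∈ L.line v, (1 : ℤ) = q := fun v hv ↦ by simp [L.card_line v hv]
  have h := L.sum_excess_add_one_mul fun _ ↦ 1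
  rw [sum_congr rfl hline] at h
  simp only [mul_one, sum_add_distrib, sum_const, card_univ, L.card_points, L.card_index,
    nsmul_eq_mul] at h
  push_cast at h
  linarith

theorem sum_excess_sq : ∑ a, L.excess a ^ 2 = (q : ℤ) ^ 2 := by
  have h := L.sum_excess_add_one_mul L.excess
  rw [sum_congr rfl fun v hv ↦ sum_line_excess hv] at h
  simp only [add_mul, one_mul, ← sq, sum_add_distrib, sum_excess, sum_const,
    L.card_index, nsmul_eq_mul] at h
  push_cast at h
  linarith

variable {L} {o : α}

theorem excess_eq_zero_of_excess_eq {a b : α} (ha : L.excess a = q) (hb : b ≠ a) :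
    L.excess b = 0 := by
  have h : ∑ c ∈ {a, b}, L.excess c ^ 2 ≤ ∑ c, L.excess c ^ 2 :=
    sum_le_univ_sum_of_nonneg fun c ↦ sq_nonneg _
  rw [sum_pair hb.symm, ha, sum_excess_sq] at h
  exact pow_eq_zero_iff two_ne_zero |>.1 (le_antisymm (by linarith) (sq_nonneg _))

theorem excess_ne_of_ncard_eq_three (h3 : (L.excess '' {o}ᶜ).ncard = 3) (a : α) :
    L.excess a ≠ q := by
  intro ha
  have hsub : L.excess '' {o}ᶜ ⊆ {0, (q : ℤ)} := by
    rintro _ ⟨b, -, rfl⟩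
    obtain rfl | hb := eq_or_ne b a
    · exact .inr ha
    · exact .inl (excess_eq_zero_of_excess_eq ha hb)
  have := (Set.ncard_le_ncard hsub).trans (Set.ncard_insert_le _ _)
  rw [h3, Set.ncard_singleton] at this
  omega

theorem exists_ne_excess_eq_zero (ho : L.excess o = 0) : ∃ a ≠ o, L.excess a = 0 := by
  by_contra! hne
  have hnonneg : ∀ a ∈ univ.erase o, 0 ≤ L.excess a ^ 2 - 1 := fun a ha ↦ by
    have := sq_pos_of_ne_zero (hne a (ne_of_mem_erase ha))
    omega
  have hcard : #(univ.erase o) + 1 = q ^ 2 := by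
    rw [card_erase_add_one (mem_univ o), card_univ, L.card_points]
  have hsum : ∑ a ∈ univ.erase o, (L.excess a ^ 2 - 1) = 1 := by
    rw [sum_sub_distrib, sum_erase _ (by simp [ho]), sum_excess_sq, sum_const, nsmul_one]
    zify at hcard
    linarith
  -- The summands are of the form `n ^ 2 - 1` and at most `1`, hence they all vanish.
  have hzero : ∀ a ∈ univ.erase o, L.excess a ^ 2 - 1 = 0 := fun a ha ↦ by
    have hle : L.excess a ^ 2 - 1 ≤ 1 := (single_le_sum hnonneg ha).trans_eq hsum
    have := hnonneg a ha
    have : L.excess a ≤ 1 := by nlinarith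
    have : -1 ≤ L.excess a := L.neg_one_le_excess a
    nlinarith
  rw [sum_eq_zero hzero] at hsum
  exact zero_ne_one hsum

theorem exists_excess_eq_neg_one {b : α} (hb : 0 < L.excess b) (hq : ∀ a, L.excess a ≠ q) :
    ∃ a, L.excess a = -1 := by
  by_contra! hneg
  have hnonneg (a) : 0 ≤ L.excess a := by
    have := L.neg_one_le_excess a
    have := hneg a
    omega
  have hlt (a) : L.excess a < q := (hq a).lt_of_le <|
    L.sum_excess ▸ single_le_sum (fun c _ ↦ hnonneg c) (mem_univ a)
  have : ∑ a, L.excess a ^ 2 < ∑ a, q * L.excess a := by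
    refine sum_lt_sum (fun a _ ↦ ?_) ⟨b, mem_univ b, ?_⟩
    · nlinarith [hnonneg a, hlt a]
    · nlinarith [hlt b]
  rw [← mul_sum, sum_excess, sum_excess_sq, sq] at this
  exact this.false

theorem exists_one_lt_excess (hv : v ∈ L.index) (hov : o ∈ L.line v) (ho : L.excess o = 0) :
    ∃ b ∈ L.line v, b ≠ o ∧ 1 < L.excess b := by
  have h : ∑ a ∈ (L.line v).erase o, 1 < ∑ a ∈ (L.line v).erase o, L.excess a := by
    have hcard := card_erase_add_one hov
    rw [L.card_line v hv] at hcard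
    rw [sum_erase _ ho, sum_line_excess hv, sum_const, nsmul_one]
    omega
  obtain ⟨b, hb, hlt⟩ := exists_lt_of_sum_lt h
  exact ⟨b, mem_of_mem_erase hb, ne_of_mem_erase hb, hlt⟩

theorem exists_dvd_excess_of_ncard_eq_three (hv : v ∈ L.index) (hov : o ∈ L.line v)
    (ho : L.excess o = 0) (h3 : (L.excess '' {o}ᶜ).ncard = 3) :
    ∃ m : ℤ, 1 < m ∧ m ∣ q ∧ ∀ u ∈ L.index, ∀ a ∈ L.line u, m ∣ L.excess a := by
  obtain ⟨b, -, hbo, hb⟩ := exists_one_lt_excess hv hov ho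
  obtain ⟨c, hco, hc⟩ := exists_ne_excess_eq_zero ho
  obtain ⟨e, he⟩ := exists_excess_eq_neg_one (zero_lt_one.trans hb) (excess_ne_of_ncard_eq_three h3)
  have heo : e ≠ o := by
    rintro rfl
    omega
  have hvalues : {-1, 0, L.excess b} = L.excess '' {o}ᶜ := by
    refine Set.eq_of_subset_of_ncard_le ?_ ?_
    · rintro _ (rfl | rfl | rfl)
      exacts [⟨e, heo, he⟩, ⟨c, hco, hc⟩, ⟨b, hbo, rfl⟩]
    · rw [h3, Set.ncard_eq_three.2 ⟨-1, 0, L.excess b, by omega, by omega, by omega, rfl⟩]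
  have hdvd (u) (hu : u ∈ L.index) (a) (ha : a ∈ L.line u) : L.excess b ∣ L.excess a := by
    obtain rfl | hao := eq_or_ne a o
    · simp [ho]
    obtain h | h | h := hvalues.symm.subset ⟨a, hao, rfl⟩
    · have := excess_eq_card_of_mem_line hu ha
      omega
    · simp [h]
    · rw [h]
  exact ⟨L.excess b, hb, sum_line_excess hv ▸ dvd_sum (hdvd v hv), hdvd⟩

end CrossingLines

end CrossingLines

section PowerSums

open Polynomial

variable {R ι κ : Type*} [CommRing R] {S : Finset ι} {x y : ι → R} {n : ℕ}

theorem sum_prod_add_eq_zero (h : ∀ i ≤ n, ∑ z ∈ S, x z ^ i * y z ^ (n - i) = 0) {A : Finset κ}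
    (hA : #A = n) (a b : κ → R) : ∑ z ∈ S, ∏ w ∈ A, (a w * x z + b w * y z) = 0 := by
  calc
    ∑ z ∈ S, ∏ w ∈ A, (a w * x z + b w * y z)
        = ∑ z ∈ S, ∑ B ∈ A.powerset, ((∏ w ∈ B, a w) * ∏ w ∈ A \ B, b w) *
            (x z ^ #B * y z ^ (n - #B)) := by
      refine sum_congr rfl fun z _ ↦ (prod_add _ _ A).trans (sum_congr rfl fun B hB ↦ ?_)
      simp only [prod_mul_distrib, prod_const, card_sdiff_of_subset (mem_powerset.1 hB), hA]
      ring
    _ = ∑ B ∈ A.powerset, ((∏ w ∈ B, a w) * ∏ w ∈ A \ B, b w) *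
          ∑ z ∈ S, x z ^ #B * y z ^ (n - #B) := by
      simp only [mul_sum]
      exact sum_comm
    _ = 0 := sum_eq_zero fun B hB ↦ by
      rw [h _ (hA ▸ card_le_card (mem_powerset.1 hB)), mul_zero]

variable [IsDomain R]

/-- The product of the `n` linear forms that vanish at the points of `S` other than `a` sums to
zero over `S`, so it vanishes at `a` too. -/
theorem exists_ne_mul_eq_mul (h : ∀ i ≤ n, ∑ z ∈ S, x z ^ i * y z ^ (n - i) = 0)
    (hS : #S = n + 1) {a : ι} (ha : a ∈ S) : ∃ b ∈ S, b ≠ a ∧ x a * y b = x b * y a := by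
  have hcard : #(S.erase a) = n := by rw [card_erase_of_mem ha, hS, Nat.add_sub_cancel]
  have hprod : ∏ w ∈ S.erase a, (y w * x a + -x w * y a) = 0 := by
    refine (sum_eq_single_of_mem a ha fun z hz hza ↦ ?_).symm.trans
      (sum_prod_add_eq_zero h hcard y fun w ↦ -x w)
    exact prod_eq_zero (mem_erase.2 ⟨hza, hz⟩) (by ring)
  obtain ⟨b, hb, hab⟩ := prod_eq_zero_iff.1 hprod
  exact ⟨b, mem_of_mem_erase hb, ne_of_mem_erase hb, by linear_combination hab⟩

theorem eq_zero_of_sum_mul_pow_eq_zero {c : ℕ → R} {T : Finset R} (hT : n ≤ #T)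
    (h : ∀ t ∈ T, ∑ i ∈ range n, c i * t ^ i = 0) {i : ℕ} (hi : i < n) : c i = 0 := by
  have hf : ∑ j : Fin n, C (c j) * X ^ (j : ℕ) = 0 := by
    refine eq_zero_of_degree_lt_of_eval_finset_eq_zero T ?_ fun t ht ↦ ?_
    · exact (degree_sum_fin_lt _).trans_le (by exact_mod_cast hT)
    · rw [Fin.sum_univ_eq_sum_range fun j ↦ C (c j) * X ^ j]
      simpa [eval_finsetSum] using h t ht
  have hcoeff := congrArg (coeff · i) hf
  rw [Fin.sum_univ_eq_sum_range fun j ↦ C (c j) * X ^ j] at hcoeff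
  simpa [hi] using hcoeff

variable (p : ℕ) [Fact p.Prime] [CharP R p] {r : ℕ}

theorem sub_pow_char_pow_sub_one (hr : r ≠ 0) (x y : R) :
    (x - y) ^ (p ^ r - 1) = ∑ i ∈ range (p ^ r), x ^ i * y ^ (p ^ r - 1 - i) := by
  obtain rfl | hxy := eq_or_ne x y
  · have hpow (i) (hi : i ∈ range (p ^ r)) : x ^ i * x ^ (p ^ r - 1 - i) = x ^ (p ^ r - 1) := by
      rw [← pow_add, Nat.add_sub_cancel' (Nat.le_sub_one_of_lt (mem_range.1 hi))]
    have hlt := Nat.one_lt_pow hr (Fact.out : p.Prime).one_lt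
    rw [sum_congr rfl hpow, sum_const, card_range, nsmul_eq_mul, Nat.cast_pow, CharP.cast_eq_zero,
      zero_pow hr, zero_mul, sub_self, zero_pow (Nat.sub_pos_of_lt hlt).ne']
  · refine mul_right_cancel₀ (sub_ne_zero.2 hxy) ?_
    rw [geom_sum₂_mul, pow_sub_one_mul (NeZero.ne _), sub_pow_char_pow]

theorem sum_pow_mul_pow_eq_zero (hr : r ≠ 0) {T : Finset R} (hT : p ^ r ≤ #T)
    (h : ∀ t ∈ T, ∑ z ∈ S, (t * x z - y z) ^ (p ^ r - 1) = 0) {i : ℕ} (hi : i ≤ p ^ r - 1) :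
    ∑ z ∈ S, x z ^ i * y z ^ (p ^ r - 1 - i) = 0 := by
  refine eq_zero_of_sum_mul_pow_eq_zero (c := fun i ↦ ∑ z ∈ S, x z ^ i * y z ^ (p ^ r - 1 - i))
    hT (fun t ht ↦ ?_) (Nat.lt_of_le_sub_one (NeZero.pos _) hi)
  rw [← h t ht]
  simp only [sub_pow_char_pow_sub_one p hr, sum_mul]
  rw [sum_comm]
  exact sum_congr rfl fun z _ ↦ sum_congr rfl fun j _ ↦ by ring

end PowerSums

section PowerFibers

variable {K : Type*} [Field K] [Fintype K] {m n : ℕ}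

theorem card_filter_pow_eq_le (hn : n ≠ 0) (u : K) : #{x : K | x ^ n = u} ≤ n := by
  have hsub : ({x : K | x ^ n = u} : Finset K) ⊆ (Polynomial.nthRoots n u).toFinset := fun x hx ↦ by
    simpa [Polynomial.mem_nthRoots hn.bot_lt] using hx
  exact (card_le_card hsub).trans ((Multiset.toFinset_card_le _).trans
    (Polynomial.card_nthRoots n u))

theorem mapsTo_pow_erase_zero (hmn : m * n = Fintype.card K - 1) :
    Set.MapsTo (· ^ n : K → K) (univ.erase 0 : Finset K) ({u | u ^ m = 1} : Finset K) := by
  intro x hx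
  rw [mem_coe, mem_filter_univ, ← pow_mul, mul_comm n, hmn]
  exact FiniteField.pow_card_sub_one_eq_one x (ne_of_mem_erase hx)

theorem card_filter_erase_zero_pow_eq (hmn : m * n = Fintype.card K - 1) {u : K}
    (hu : u ^ m = 1) : #{x ∈ univ.erase (0 : K) | x ^ n = u} = n := by
  have hmn0 : m * n ≠ 0 := hmn ▸ (Nat.sub_pos_of_lt Fintype.one_lt_card).ne'
  refine card_fiber_eq_of_mapsTo (mapsTo_pow_erase_zero hmn)
    (card_filter_pow_eq_le (left_ne_zero_of_mul hmn0) 1) (fun w _ ↦ ?_) ?_ u (by simpa using hu)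
  · exact (card_le_card (filter_subset_filter _ (erase_subset _ _))).trans
      (card_filter_pow_eq_le (right_ne_zero_of_mul hmn0) w)
  · rw [hmn, card_erase_of_mem (mem_univ 0), card_univ]

theorem card_filter_pow_eq_one (hmn : m * n = Fintype.card K - 1) : #{x : K | x ^ n = 1} = n := by
  have hn : n ≠ 0 := right_ne_zero_of_mul (hmn ▸ (Nat.sub_pos_of_lt Fintype.one_lt_card).ne')
  have h := card_filter_erase_zero_pow_eq hmn (one_pow m)
  rwa [filter_erase, erase_eq_of_notMem (by simp [hn])] at h

theorem sum_erase_zero_pow {M : Type*} [AddCommMonoid M] (hmn : m * n = Fintype.card K - 1)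
    (g : K → M) : ∑ x ∈ univ.erase (0 : K), g (x ^ n) = n • ∑ u : K with u ^ m = 1, g u := by
  rw [← sum_fiberwise_of_maps_to (mapsTo_pow_erase_zero hmn), smul_sum]
  refine sum_congr rfl fun u hu ↦ ?_
  rw [sum_congr rfl fun x hx ↦ congrArg g (mem_filter.1 hx).2, sum_const,
    card_filter_erase_zero_pow_eq hmn ((mem_filter_univ u).1 hu)]

end PowerFibers

section QuadraticExtension

variable {K : Type*} [Field K] [Fintype K] {q : ℕ}

theorem one_lt_of_card_eq_sq (hK : Fintype.card K = q ^ 2) : 1 < q :=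
  (one_lt_pow_iff_of_nonneg q.zero_le two_ne_zero).1 (hK ▸ Fintype.one_lt_card)

theorem exists_eq_pow_of_card_eq_sq (p : ℕ) [Fact p.Prime] [CharP K p]
    (hK : Fintype.card K = q ^ 2) : ∃ r ≠ 0, q = p ^ r := by
  obtain ⟨k, -, hk⟩ := FiniteField.card K p
  obtain ⟨r, -, hr⟩ := (Nat.dvd_prime_pow Fact.out).1 (hk ▸ hK ▸ dvd_pow_self q two_ne_zero)
  refine ⟨r, ?_, hr⟩
  rintro rfl
  exact (one_lt_of_card_eq_sq hK).ne' (hr.trans (pow_zero p))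

/-- The conjugation `x ↦ x ^ q` of the field `K` of order `q ^ 2` over its subfield of order `q`. -/
def conj (hK : Fintype.card K = q ^ 2) : K →+* K where
  toFun x := x ^ q
  map_one' := one_pow q
  map_mul' x y := mul_pow x y q
  map_zero' := zero_pow (one_lt_of_card_eq_sq hK).ne_bot
  map_add' x y := by
    obtain ⟨p, _⟩ := CharP.exists K
    have : Fact p.Prime := ⟨CharP.char_is_prime K p⟩
    obtain ⟨r, -, rfl⟩ := exists_eq_pow_of_card_eq_sq p hK
    exact add_pow_char_pow x y p r

theorem conj_apply (hK : Fintype.card K = q ^ 2) (x : K) : conj hK x = x ^ q := rfl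

theorem conj_conj (hK : Fintype.card K = q ^ 2) (x : K) : conj hK (conj hK x) = x := by
  rw [conj_apply, conj_apply, ← pow_mul, ← sq, ← hK, FiniteField.pow_card]

/-- The solutions `a` of `c + a + a ^ q * u = 0`. When `u ^ (q + 1) = 1` and `c ^ q * u = c`, they
form a line of `K` viewed as an affine plane over its subfield of order `q`, and `u` determines the
direction of this line. -/
noncomputable def conjLine (q : ℕ) (c u : K) : Finset K := {a | c + a + a ^ q * u = 0}

theorem mem_conjLine {c u a : K} : a ∈ conjLine q c u ↔ c + a + a ^ q * u = 0 := by
  simp [conjLine]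

open Polynomial in
theorem card_conjLine_le (hq : 1 < q) (c : K) {u : K} (hu : u ≠ 0) : #(conjLine q c u) ≤ q := by
  have hdeg : (C u * X ^ q + X + C c).natDegree = q := by
    compute_degree!
    · simpa [hq.ne, (zero_lt_one.trans hq).ne'] using hu
    · exact hq.le
  have hne : C u * X ^ q + X + C c ≠ 0 := ne_zero_of_natDegree_gt (hdeg.symm ▸ zero_lt_one.trans hq)
  refine (card_le_degree_of_subset_roots fun a ha ↦ ?_).trans_eq hdeg
  rw [mem_roots hne, IsRoot]
  simp only [eval_add, eval_mul, eval_C, eval_X_pow, eval_X]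
  linear_combination mem_conjLine.1 ha

/-- The lines `conjLine q c v` with `c ^ q * v = c` cover the plane, so that none of these at most
`q` lines can have fewer than `q` points. -/
theorem card_conjLine (hK : Fintype.card K = q ^ 2) {c v : K} (hv : v ^ (q + 1) = 1)
    (hc : c ^ q * v = c) : #(conjLine q c v) = q := by
  have hq := one_lt_of_card_eq_sq hK
  have hv0 : v ≠ 0 := by
    rintro rfl
    simp at hv
  have hmaps : Set.MapsTo (fun a ↦ -(a + a ^ q * v)) (univ : Finset K) (conjLine q 0 (-v)) := by
    intro a _
    have hv' : v * v ^ q = 1 := by rw [← pow_succ', hv]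
    refine mem_coe.2 (mem_conjLine.2 ?_)
    rw [← conj_apply hK, map_neg, map_add, map_mul, ← conj_apply hK a, conj_conj, conj_apply hK,
      conj_apply hK]
    linear_combination a * hv'
  have hfiber (b : K) : ({a | -(a + a ^ q * v) = b} : Finset K) = conjLine q b v :=
    filter_congr fun a _ ↦ by rw [neg_eq_iff_add_eq_zero, add_comm, add_assoc]
  rw [← hfiber c]
  refine card_fiber_eq_of_mapsTo hmaps (card_conjLine_le hq 0 (neg_ne_zero.2 hv0))
    (fun b _ ↦ ?_) (by rw [card_univ, hK, sq]) c (mem_conjLine.2 (by linear_combination -hc))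
  rw [hfiber]
  exact card_conjLine_le hq b hv0

theorem mem_conjLine_and_mem_conjLine_iff (hK : Fintype.card K = q ^ 2) {b c u v : K}
    (hu : u ^ (q + 1) = 1) (hv : v ^ (q + 1) = 1) (huv : u ≠ v) (hb : b ^ q * u = b)
    (hc : c ^ q * v = c) {a : K} :
    a ∈ conjLine q b u ∧ a ∈ conjLine q c v ↔ a = (u * c - v * b) / (v - u) := by
  have hvu : v - u ≠ 0 := sub_ne_zero.2 huv.symm
  rw [mem_conjLine, mem_conjLine, eq_div_iff hvu]
  constructor
  · rintro ⟨hau, hav⟩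
    linear_combination v * hau - u * hav
  · intro ha
    have hconj := congrArg (conj hK) ha
    simp only [map_mul, map_sub, conj_apply] at hconj
    have hu' : u * u ^ q = 1 := by rw [← pow_succ', hu]
    have hv' : v * v ^ q = 1 := by rw [← pow_succ', hv]
    have hpow : a ^ q * (u - v) = c - b := by
      linear_combination u * v * hconj - (a ^ q * u + u * b ^ q) * hv' +
        (a ^ q * v + v * c ^ q) * hu' + hc - hb
    constructor <;> refine mul_right_cancel₀ hvu ?_
    · linear_combination ha - u * hpow
    · linear_combination ha - v * hpow

theorem add_one_mul_sub_one_eq_card_sub_one {α : Type*} [Fintype α] (h : Fintype.card α = q ^ 2) :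
    (q + 1) * (q - 1) = Fintype.card α - 1 := by
  rw [h, ← Nat.sq_sub_sq, one_pow]

/-- The elements of `K` of norm `1` over the subfield of order `q`; they index `nihoLines`. -/
noncomputable def normOne (q : ℕ) (K : Type*) [Field K] [Fintype K] : Finset K :=
  {u | u ^ (q + 1) = 1}

theorem mem_normOne {u : K} : u ∈ normOne q K ↔ u ^ (q + 1) = 1 := by
  simp [normOne]

theorem card_normOne (hK : Fintype.card K = q ^ 2) : #(normOne q K) = q + 1 :=
  card_filter_pow_eq_one ((mul_comm _ _).trans (add_one_mul_sub_one_eq_card_sub_one hK))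

theorem ne_zero_of_mem_normOne {u : K} (hu : u ∈ normOne q K) : u ≠ 0 :=
  (IsUnit.of_pow_eq_one (mem_normOne.1 hu) q.succ_ne_zero).ne_zero

theorem neg_one_mem_normOne (hK : Fintype.card K = q ^ 2) : (-1 : K) ∈ normOne q K := by
  rw [mem_normOne, pow_succ, ← conj_apply hK, map_neg, map_one, neg_one_mul, neg_neg]

theorem mul_mem_normOne {u v : K} (hu : u ∈ normOne q K) (hv : v ∈ normOne q K) :
    u * v ∈ normOne q K := by
  rw [mem_normOne, mul_pow, mem_normOne.1 hu, mem_normOne.1 hv, one_mul]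

theorem inv_mem_normOne {u : K} (hu : u ∈ normOne q K) : u⁻¹ ∈ normOne q K := by
  rw [mem_normOne, inv_pow, mem_normOne.1 hu, inv_one]

theorem conj_zpow_of_mem_normOne (hK : Fintype.card K = q ^ 2) {u : K} (hu : u ∈ normOne q K)
    (n : ℤ) : conj hK (u ^ n) = u ^ (-n) := by
  rw [map_zpow₀, conj_apply,
    eq_inv_of_mul_eq_one_left ((pow_succ u q).symm.trans (mem_normOne.1 hu)), inv_zpow']

theorem injOn_zpow_normOne {n : ℤ} (hn : IsCoprime n (q + 1)) :
    Set.InjOn (fun u : K ↦ u ^ n) (normOne q K) := by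
  obtain ⟨a, b, hab⟩ := hn
  have hinv (u : K) (hu : u ∈ normOne q K) : (u ^ n) ^ a = u := by
    have hu1 : u ^ (q + 1 : ℤ) = 1 := mod_cast mem_normOne.1 hu
    rw [← zpow_mul, mul_comm, ← mul_one (u ^ _), ← one_zpow b, ← hu1, ← zpow_mul,
      ← zpow_add₀ (ne_zero_of_mem_normOne hu), mul_comm _ b, hab, zpow_one]
  intro u hu v hv huv
  rw [← hinv u hu, ← hinv v hv]
  exact congrArg (· ^ a) huv

/-- The constant term of the line of index `u` in `nihoLines`. -/
def nihoCoeff (s : ℤ) (u : K) : K := u ^ s + u ^ (1 - s)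

theorem nihoCoeff_pow_mul (hK : Fintype.card K = q ^ 2) (s : ℤ) {u : K} (hu : u ∈ normOne q K) :
    nihoCoeff s u ^ q * u = nihoCoeff s u := by
  have hu0 := ne_zero_of_mem_normOne hu
  rw [← conj_apply hK, nihoCoeff, map_add, conj_zpow_of_mem_normOne hK hu,
    conj_zpow_of_mem_normOne hK hu, add_mul, ← zpow_add_one₀ hu0, ← zpow_add_one₀ hu0, add_comm]
  congr 2 <;> ring

theorem nihoCoeff_eq_zero_iff (hK : Fintype.card K = q ^ 2) {s : ℤ}
    (hs : IsCoprime (2 * s - 1) (q + 1)) {u : K} (hu : u ∈ normOne q K) :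
    nihoCoeff s u = 0 ↔ u = -1 := by
  have hu0 := ne_zero_of_mem_normOne hu
  have hpow : (-1 : K) ^ (2 * s - 1) = -1 := Odd.neg_one_zpow ⟨s - 1, by ring⟩
  have hcoeff : nihoCoeff s u = u ^ (1 - s) * (u ^ (2 * s - 1) - (-1) ^ (2 * s - 1)) := by
    rw [hpow, mul_sub, ← zpow_add₀ hu0, nihoCoeff, mul_neg_one, sub_neg_eq_add]
    congr 2
    ring
  rw [hcoeff, mul_eq_zero_iff_left (zpow_ne_zero _ hu0), sub_eq_zero]
  exact (injOn_zpow_normOne hs).eq_iff hu (neg_one_mem_normOne hK)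

/-- The lines `u ^ s + u ^ (1 - s) + a + a ^ q * u = 0` for `u ^ (q + 1) = 1`: the number of them
through `a` determines the value at `a` of the Weil sum of the Niho exponent `1 + s * (q - 1)`. -/
noncomputable def nihoLines (hK : Fintype.card K = q ^ 2) (s : ℤ) : CrossingLines q K K where
  index := normOne q K
  line u := conjLine q (nihoCoeff s u) u
  meet u v := (u * nihoCoeff s v - v * nihoCoeff s u) / (v - u)
  card_points := hK
  card_index := card_normOne hK
  card_line _ hu := card_conjLine hK (mem_normOne.1 hu) (nihoCoeff_pow_mul hK s hu)
  mem_line_and_mem_line_iff _ hu _ hv huv _ :=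
    mem_conjLine_and_mem_conjLine_iff hK (mem_normOne.1 hu) (mem_normOne.1 hv) huv
      (nihoCoeff_pow_mul hK s hu) (nihoCoeff_pow_mul hK s hv)

theorem excess_nihoLines (hK : Fintype.card K = q ^ 2) (s : ℤ) (a : K) :
    (nihoLines hK s).excess a = #{u ∈ normOne q K | nihoCoeff s u + a + a ^ q * u = 0} - 1 := by
  simp only [CrossingLines.excess, nihoLines, mem_conjLine]

theorem excess_nihoLines_zero (hK : Fintype.card K = q ^ 2) {s : ℤ}
    (hs : IsCoprime (2 * s - 1) (q + 1)) : (nihoLines hK s).excess 0 = 0 := by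
  have hsingle : {u ∈ normOne q K | nihoCoeff s u + 0 + 0 ^ q * u = 0} = {-1} := by
    ext u
    rw [mem_filter, mem_singleton, ← conj_apply hK, map_zero, zero_mul, add_zero, add_zero]
    exact ⟨fun ⟨hu, h⟩ ↦ (nihoCoeff_eq_zero_iff hK hs hu).1 h, fun h ↦ h ▸
      ⟨neg_one_mem_normOne hK, (nihoCoeff_eq_zero_iff hK hs (neg_one_mem_normOne hK)).2 rfl⟩⟩
  rw [excess_nihoLines, hsingle, card_singleton, Nat.cast_one, sub_self]

theorem excess_nihoLines_neg_one (hK : Fintype.card K = q ^ 2) {s : ℤ}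
    (h : ∀ u ∈ normOne q K, nihoCoeff s u = 1 + u) : (nihoLines hK s).excess (-1) = q := by
  rw [excess_nihoLines, filter_true_of_mem, card_normOne hK]
  · simp
  · intro u hu
    rw [h u hu, ← conj_apply hK, map_neg, map_one]
    ring

/-- The coordinate with which the line of index `v * z` crosses that of index `v`, see
`meet_nihoLines_mul`. At `z = 1` it is the junk value `0`. -/
def crossingCoeff (s : ℤ) (z : K) : K := (z - z ^ s) / (1 - z)

theorem meet_nihoLines_mul (hK : Fintype.card K = q ^ 2) (s : ℤ) {v z : K} (hv : v ≠ 0)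
    (hz : z ≠ 1) :
    (nihoLines hK s).meet (v * z) v =
      v ^ s * crossingCoeff s z + v ^ (1 - s) * crossingCoeff (1 - s) z := by
  have hz' : 1 - z ≠ 0 := sub_ne_zero.2 hz.symm
  have hvz : v - v * z = v * (1 - z) := by ring
  simp only [nihoLines, crossingCoeff, nihoCoeff, mul_zpow, hvz]
  field_simp
  ring

theorem conj_crossingCoeff (hK : Fintype.card K = q ^ 2) (s : ℤ) {z : K}
    (hz : z ∈ normOne q K) : conj hK (crossingCoeff s z) = z ^ (-s) * crossingCoeff s z := by
  obtain rfl | hz1 := eq_or_ne z 1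
  · simp [crossingCoeff]
  have hz0 := ne_zero_of_mem_normOne hz
  have hz' : 1 - z ≠ 0 := sub_ne_zero.2 hz1.symm
  have hconj := conj_zpow_of_mem_normOne hK hz 1
  rw [zpow_one, zpow_neg_one] at hconj
  rw [crossingCoeff, map_div₀, map_sub, map_sub, map_one, hconj, conj_zpow_of_mem_normOne hK hz,
    zpow_neg]
  have hzs : z - 1 ≠ 0 := sub_ne_zero.2 hz1
  field_simp
  ring

theorem sum_meet_nihoLines {M : Type*} [AddCommMonoid M] (hK : Fintype.card K = q ^ 2) (s : ℤ)
    {v : K} (hv : v ∈ normOne q K) (g : K → M) :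
    ∑ u ∈ (normOne q K).erase v, g ((nihoLines hK s).meet u v) =
      ∑ z ∈ (normOne q K).erase 1,
        g (v ^ s * crossingCoeff s z + v ^ (1 - s) * crossingCoeff (1 - s) z) := by
  have hv0 := ne_zero_of_mem_normOne hv
  refine (sum_nbij' (v * ·) (v⁻¹ * ·) (fun z hz ↦ ?_) (fun u hu ↦ ?_) (fun z _ ↦ ?_) (fun u _ ↦ ?_)
    fun z hz ↦ ?_).symm
  · exact mem_erase.2 ⟨fun h ↦ ne_of_mem_erase hz ((mul_eq_left₀ hv0).1 h),
      mul_mem_normOne hv (mem_of_mem_erase hz)⟩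
  · exact mem_erase.2 ⟨fun h ↦ ne_of_mem_erase hu ((inv_mul_eq_one₀ hv0).1 h).symm,
      mul_mem_normOne (inv_mem_normOne hv) (mem_of_mem_erase hu)⟩
  · exact inv_mul_cancel_left₀ hv0 z
  · exact mul_inv_cancel_left₀ hv0 u
  · rw [meet_nihoLines_mul hK s hv0 (ne_of_mem_erase hz)]

theorem intCast_eq_zero_of_dvd_prime_pow {R : Type*} [Ring R] {p : ℕ} (hp : p.Prime)
    [CharP R p] {m n : ℤ} {r : ℕ} (hm : 1 < m) (hmp : m ∣ (p ^ r : ℕ)) (hmn : m ∣ n) :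
    (n : R) = 0 := by
  lift m to ℕ using (zero_lt_one.trans hm).le
  obtain ⟨k, -, rfl⟩ := (Nat.dvd_prime_pow hp).1 (Int.natCast_dvd_natCast.1 hmp)
  have hk : k ≠ 0 := by
    rintro rfl
    simp at hm
  exact (CharP.intCast_eq_zero_iff R p n).2
    ((Int.natCast_dvd_natCast.2 (dvd_pow_self p hk)).trans hmn)

theorem sum_crossingCoeff_pow_eq_zero (hK : Fintype.card K = q ^ 2) {s m : ℤ} (hm : 1 < m)
    (hmq : m ∣ q)
    (hdvd : ∀ u ∈ normOne q K, ∀ a ∈ (nihoLines hK s).line u, m ∣ (nihoLines hK s).excess a)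
    (n : ℕ) {v : K} (hv : v ∈ normOne q K) : ∑ z ∈ (normOne q K).erase 1,
      (v ^ s * crossingCoeff s z + v ^ (1 - s) * crossingCoeff (1 - s) z) ^ n = 0 := by
  obtain ⟨p, _⟩ := CharP.exists K
  have hp : Fact p.Prime := ⟨CharP.char_is_prime K p⟩
  obtain ⟨r, -, hqr⟩ := exists_eq_pow_of_card_eq_sq p hK
  rw [← sum_meet_nihoLines hK s hv (· ^ n)]
  refine (CrossingLines.sum_line_excess_mul hv _).symm.trans (sum_eq_zero fun a ha ↦ ?_)
  rw [intCast_eq_zero_of_dvd_prime_pow hp.out hm (hqr ▸ hmq) (hdvd v hv a ha), zero_mul]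

theorem exists_ne_crossingCoeff_mul_eq_mul (hK : Fintype.card K = q ^ 2) {s : ℤ}
    (hs : IsCoprime (2 * s - 1) (q + 1))
    (hsum : ∀ v ∈ normOne q K, ∑ z ∈ (normOne q K).erase 1,
      (v ^ s * crossingCoeff s z + v ^ (1 - s) * crossingCoeff (1 - s) z) ^ (q - 1) = 0)
    {z : K} (hz : z ∈ (normOne q K).erase 1) : ∃ w ∈ (normOne q K).erase 1, w ≠ z ∧
      crossingCoeff (1 - s) z * crossingCoeff s w =
        crossingCoeff (1 - s) w * crossingCoeff s z := by
  obtain ⟨p, _⟩ := CharP.exists K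
  have : Fact p.Prime := ⟨CharP.char_is_prime K p⟩
  obtain ⟨r, hr, rfl⟩ := exists_eq_pow_of_card_eq_sq p hK
  set q := p ^ r
  have hinj : Set.InjOn (fun v : K ↦ v ^ (1 - 2 * s)) (normOne q K) :=
    injOn_zpow_normOne (by simpa using hs.neg_left)
  have hT : q ≤ #((normOne q K).image (· ^ (1 - 2 * s))) := by
    rw [card_image_of_injOn hinj, card_normOne hK]
    exact q.le_succ
  have hS : #((normOne q K).erase 1) = q - 1 + 1 := by
    rw [card_erase_of_mem (mem_normOne.2 (one_pow _)), card_normOne hK]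
    have := one_lt_of_card_eq_sq hK
    omega
  have hscaled : ∀ t ∈ (normOne q K).image (· ^ (1 - 2 * s)), ∑ z ∈ (normOne q K).erase 1,
      (t * crossingCoeff (1 - s) z - -crossingCoeff s z) ^ (q - 1) = 0 := by
    simp only [forall_mem_image]
    intro v hv
    have hv0 := ne_zero_of_mem_normOne hv
    rw [← mul_zero ((v ^ (-s)) ^ (q - 1)), ← hsum v hv, mul_sum]
    refine sum_congr rfl fun z _ ↦ ?_
    rw [← mul_pow, mul_add, ← mul_assoc, ← mul_assoc, ← zpow_add₀ hv0, ← zpow_add₀ hv0,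
      neg_add_cancel, zpow_zero]
    ring_nf
  obtain ⟨w, hw, hwz, h⟩ := exists_ne_mul_eq_mul
    (fun i ↦ sum_pow_mul_pow_eq_zero p hr hT hscaled) hS hz
  exact ⟨w, hw, hwz, by linear_combination -h⟩

theorem eq_one_of_crossingCoeff_eq_zero {K : Type*} [Field K] {s : ℤ} {z : K} (hz : z ≠ 0)
    (h : crossingCoeff s z = 0) (h' : crossingCoeff (1 - s) z = 0) : z = 1 := by
  by_contra hz1
  have hz' : 1 - z ≠ 0 := sub_ne_zero.2 (Ne.symm hz1)
  rw [crossingCoeff, div_eq_zero_iff, or_iff_left hz', sub_eq_zero] at h h'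
  have hmul := zpow_add₀ hz s (1 - s)
  rw [← h, ← h', add_sub_cancel, zpow_one] at hmul
  exact hz1 (mul_left_cancel₀ hz (hmul.symm.trans (mul_one z).symm))

/-- Conjugation multiplies the two sides of the relation between `z` and `w` by factors which are
distinct for `z ≠ w`, so that both sides vanish. -/
theorem crossingCoeff_mul_crossingCoeff_eq_zero_of_mul_eq_mul (hK : Fintype.card K = q ^ 2) {s : ℤ}
    (hs : IsCoprime (2 * s - 1) (q + 1)) {z w : K} (hz : z ∈ normOne q K)
    (hw : w ∈ normOne q K) (hwz : w ≠ z)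
    (h : crossingCoeff (1 - s) z * crossingCoeff s w =
      crossingCoeff (1 - s) w * crossingCoeff s z) :
    crossingCoeff (1 - s) w * crossingCoeff s z = 0 := by
  have hz0 := ne_zero_of_mem_normOne hz
  have hw0 := ne_zero_of_mem_normOne hw
  have hconj := congrArg (conj hK) h
  simp only [map_mul, conj_crossingCoeff hK _ hz, conj_crossingCoeff hK _ hw] at hconj
  have hfactor : (z ^ (-(1 - s)) * w ^ (-s) - w ^ (-(1 - s)) * z ^ (-s)) *
      (crossingCoeff (1 - s) w * crossingCoeff s z) = 0 := by
    linear_combination hconj - z ^ (-(1 - s)) * w ^ (-s) * h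
  refine (mul_eq_zero.1 hfactor).resolve_left fun hzw ↦ hwz (injOn_zpow_normOne hs hw hz ?_)
  have hsplit (x : K) (hx : x ≠ 0) : x ^ (2 * s - 1) = x ^ (-(1 - s)) * x ^ s := by
    rw [← zpow_add₀ hx]
    ring_nf
  have hcancel (x : K) (hx : x ≠ 0) : x ^ s * x ^ (-s) = 1 := by
    rw [← zpow_add₀ hx, add_neg_cancel, zpow_zero]
  linear_combination hsplit w hw0 - hsplit z hz0 - z ^ s * w ^ s * hzw +
    z ^ s * z ^ (-(1 - s)) * hcancel w hw0 - w ^ s * w ^ (-(1 - s)) * hcancel z hz0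

theorem crossingCoeff_mul_crossingCoeff_eq_zero (hK : Fintype.card K = q ^ 2) {s : ℤ}
    (hs : IsCoprime (2 * s - 1) (q + 1)) {z w : K} (hz : z ∈ normOne q K)
    (hw : w ∈ normOne q K) (hw1 : w ≠ 1) (hwz : w ≠ z)
    (h : crossingCoeff (1 - s) z * crossingCoeff s w =
      crossingCoeff (1 - s) w * crossingCoeff s z) :
    crossingCoeff s z * crossingCoeff (1 - s) z = 0 := by
  have h0 := crossingCoeff_mul_crossingCoeff_eq_zero_of_mul_eq_mul hK hs hz hw hwz h
  by_contra hne
  exact hw1 (eq_one_of_crossingCoeff_eq_zero (ne_zero_of_mem_normOne hw)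
    ((mul_eq_zero.1 (h.trans h0)).resolve_left (right_ne_zero_of_mul hne))
    ((mul_eq_zero.1 h0).resolve_right (left_ne_zero_of_mul hne)))

theorem nihoCoeff_eq_one_add {K : Type*} [Field K] {s : ℤ} {z : K} (hz : z ≠ 0) (hz1 : z ≠ 1)
    (h : crossingCoeff s z * crossingCoeff (1 - s) z = 0) : nihoCoeff s z = 1 + z := by
  have hz' : 1 - z ≠ 0 := sub_ne_zero.2 hz1.symm
  have hmul : z ^ s * z ^ (1 - s) = z := by
    rw [← zpow_add₀ hz, add_sub_cancel, zpow_one]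
  rw [crossingCoeff, crossingCoeff, div_mul_div_comm, div_eq_zero_iff,
    or_iff_left (mul_ne_zero hz' hz')] at h
  refine mul_left_cancel₀ hz ?_
  rw [nihoCoeff]
  linear_combination hmul - h

theorem ncard_excess_nihoLines_ne_three (hK : Fintype.card K = q ^ 2) {s : ℤ}
    (hs : IsCoprime (2 * s - 1) (q + 1)) : ((nihoLines hK s).excess '' {0}ᶜ).ncard ≠ 3 := by
  intro h3
  have hzero := excess_nihoLines_zero hK hs
  have hline : (0 : K) ∈ (nihoLines hK s).line (-1) := mem_conjLine.2 (by
    rw [(nihoCoeff_eq_zero_iff hK hs (neg_one_mem_normOne hK)).2 rfl, ← conj_apply hK]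
    simp)
  obtain ⟨m, hm, hmq, hdvd⟩ := CrossingLines.exists_dvd_excess_of_ncard_eq_three
    (neg_one_mem_normOne hK) hline hzero h3
  have hsum := fun v ↦ sum_crossingCoeff_pow_eq_zero hK hm hmq hdvd (q - 1) (v := v)
  have hcoeff : ∀ u ∈ normOne q K, nihoCoeff s u = 1 + u := fun u hu ↦ by
    obtain rfl | hu1 := eq_or_ne u 1
    · simp [nihoCoeff]
    obtain ⟨w, hw, hwu, h⟩ := exists_ne_crossingCoeff_mul_eq_mul hK hs hsum (mem_erase.2 ⟨hu1, hu⟩)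
    exact nihoCoeff_eq_one_add (ne_zero_of_mem_normOne hu) hu1
      (crossingCoeff_mul_crossingCoeff_eq_zero hK hs hu (mem_of_mem_erase hw)
        (ne_of_mem_erase hw) hwu h)
  exact CrossingLines.excess_ne_of_ncard_eq_three h3 (-1) (excess_nihoLines_neg_one hK hcoeff)

end QuadraticExtension

section NihoTheorem

variable {K R : Type*} [Field K] [Fintype K] [CommRing R] {q : ℕ}

theorem sum_addChar_add_pow_mul [IsDomain R] (hK : Fintype.card K = q ^ 2) {Ψ : AddChar K R}
    (hΨ : Ψ ≠ 1) (hΨq : ∀ x, Ψ (x ^ q) = Ψ x) (b : K) :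
    ∑ z, Ψ ((z + z ^ q) * b) = if b + b ^ q = 0 then (q : R) ^ 2 else 0 := by
  have hmove (z : K) : Ψ ((z + z ^ q) * b) = Ψ (z * (b + b ^ q)) := by
    rw [add_mul, mul_add, Ψ.map_add_eq_mul, Ψ.map_add_eq_mul, ← hΨq (z * b ^ q), mul_pow, ← pow_mul,
      ← sq, ← hK, FiniteField.pow_card]
  rw [sum_congr rfl fun z _ ↦ hmove z,
    AddChar.sum_mulShift _ (AddChar.IsPrimitive.of_ne_one hΨ), hK]
  simp only [Nat.cast_ite, Nat.cast_zero, Nat.cast_pow]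

theorem niho_add_pow (hK : Fintype.card K = q ^ 2) (s : ℤ) (a : K) {x : K} (hx : x ≠ 0) :
    x ^ (1 + s * (q - 1)) + a * x + (x ^ (1 + s * (q - 1)) + a * x) ^ q =
      x * (nihoCoeff s (x ^ (q - 1)) + a + a ^ q * x ^ (q - 1)) := by
  have hu : x ^ (q - 1) ∈ normOne q K := by
    rw [mem_normOne, ← pow_mul, mul_comm, add_one_mul_sub_one_eq_card_sub_one hK,
      FiniteField.pow_card_sub_one_eq_one x hx]
  have hxq : x ^ q = x * x ^ (q - 1) := by
    rw [← pow_succ', Nat.sub_add_cancel (one_lt_of_card_eq_sq hK).le]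
  have hxd : x ^ (1 + s * (q - 1)) = x * (x ^ (q - 1)) ^ s := by
    rw [zpow_add₀ hx, zpow_one, mul_comm s, zpow_mul, ← zpow_natCast x (q - 1),
      Nat.cast_pred (zero_lt_one.trans (one_lt_of_card_eq_sq hK))]
  rw [← conj_apply hK, map_add, map_mul, hxd, map_mul, conj_zpow_of_mem_normOne hK hu,
    conj_apply, conj_apply, hxq, nihoCoeff, zpow_sub₀ (ne_zero_of_mem_normOne hu), zpow_one,
    zpow_neg, div_eq_mul_inv]
  ring

theorem sum_sum_addChar_niho [IsDomain R] (hK : Fintype.card K = q ^ 2) {Ψ : AddChar K R}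
    (hΨ : Ψ ≠ 1) (hΨq : ∀ x, Ψ (x ^ q) = Ψ x) (s : ℤ) (a : K) :
    ∑ z, ∑ x ∈ univ.erase 0, Ψ ((z + z ^ q) * (x ^ (1 + s * (q - 1)) + a * x)) =
      (q - 1) * q ^ 2 * ((nihoLines hK s).excess a + 1 : ℤ) := by
  have hterm : ∀ x ∈ univ.erase (0 : K),
      ∑ z, Ψ ((z + z ^ q) * (x ^ (1 + s * (q - 1)) + a * x)) =
        if nihoCoeff s (x ^ (q - 1)) + a + a ^ q * x ^ (q - 1) = 0 then (q : R) ^ 2 else 0 := by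
    intro x hx
    rw [sum_addChar_add_pow_mul hK hΨ hΨq, niho_add_pow hK s a (ne_of_mem_erase hx)]
    simp only [mul_eq_zero, ne_of_mem_erase hx, false_or]
  rw [sum_comm, sum_congr rfl hterm, sum_erase_zero_pow (add_one_mul_sub_one_eq_card_sub_one hK)
    fun u ↦ if nihoCoeff s u + a + a ^ q * u = 0 then (q : R) ^ 2 else 0, ← sum_filter, sum_const,
    excess_nihoLines, normOne, nsmul_eq_mul, nsmul_eq_mul,
    Nat.cast_pred (zero_lt_one.trans (one_lt_of_card_eq_sq hK))]
  push_cast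
  ring

theorem zpow_niho_of_pow_eq_self {G : Type*} [GroupWithZero G] {y : G} (hy : y ^ q = y)
    (hy0 : y ≠ 0) (s : ℤ) : y ^ (1 + s * (q - 1)) = y := by
  rw [zpow_add₀ hy0, mul_comm s, zpow_mul, zpow_sub₀ hy0, zpow_natCast, hy, zpow_one,
    div_self hy0, one_zpow, mul_one]

theorem sum_addChar_mul_niho (Ψ : AddChar K R) (s : ℤ) (a : K) {y : K} (hy : y ^ q = y)
    (hy0 : y ≠ 0) : ∑ x ∈ univ.erase 0, Ψ (y * (x ^ (1 + s * (q - 1)) + a * x)) =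
      ∑ x ∈ univ.erase 0, Ψ (x ^ (1 + s * (q - 1)) + a * x) := by
  refine sum_bijective (y * ·) (mulLeft_bijective₀ y hy0) (fun x ↦ by simp [hy0]) fun x _ ↦ ?_
  rw [mul_zpow, zpow_niho_of_pow_eq_self hy hy0]
  ring_nf

theorem sum_sum_addChar_niho_eq_add (hK : Fintype.card K = q ^ 2) (Ψ : AddChar K R) (s : ℤ)
    (a : K) : ∑ z, ∑ x ∈ univ.erase 0, Ψ ((z + z ^ q) * (x ^ (1 + s * (q - 1)) + a * x)) =
      q * (q ^ 2 - 1) +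
        (q ^ 2 - q) * ∑ x ∈ univ.erase 0, Ψ (x ^ (1 + s * (q - 1)) + a * x) := by
  have hker : #({z | z + z ^ q = 0} : Finset K) = q := by
    have h := card_conjLine hK (c := 0) (one_pow (q + 1))
      (by rw [← conj_apply hK, map_zero, zero_mul])
    simpa only [conjLine, zero_add, mul_one] using h
  have hcompl : #({z | ¬ z + z ^ q = 0} : Finset K) = q ^ 2 - q := by
    have h := card_filter_add_card_filter_not (s := univ) (fun z : K ↦ z + z ^ q = 0)
    rw [hker, card_univ, hK] at h
    exact Nat.eq_sub_of_add_eq' h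
  have hzero : ∀ z ∈ ({z | z + z ^ q = 0} : Finset K),
      ∑ x ∈ univ.erase 0, Ψ ((z + z ^ q) * (x ^ (1 + s * (q - 1)) + a * x)) = q ^ 2 - 1 := by
    intro z hz
    simp only [(mem_filter_univ z).1 hz, zero_mul, Ψ.map_zero_eq_one, sum_const, mem_univ,
      card_erase_of_mem, card_univ, hK, nsmul_one]
    rw [Nat.cast_sub (one_le_pow₀ (one_lt_of_card_eq_sq hK).le)]
    simp
  have hfix (z : K) : (z + z ^ q) ^ q = z + z ^ q := by
    rw [← conj_apply hK, map_add, ← conj_apply hK z, conj_conj, add_comm]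
  rw [← sum_filter_add_sum_filter_not univ (fun z ↦ z + z ^ q = 0), sum_congr rfl hzero,
    sum_congr rfl fun z hz ↦ sum_addChar_mul_niho Ψ s a (hfix z) ((mem_filter_univ z).1 hz),
    sum_const, sum_const, hker, hcompl, nsmul_eq_mul, nsmul_eq_mul,
    Nat.cast_sub (Nat.le_self_pow two_ne_zero q), Nat.cast_pow]

theorem sum_addChar_niho [IsDomain R] [CharZero R] (hK : Fintype.card K = q ^ 2)
    {Ψ : AddChar K R} (hΨ : Ψ ≠ 1) (hΨq : ∀ x, Ψ (x ^ q) = Ψ x) {s : ℤ}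
    (hs : 1 + s * (q - 1) ≠ 0) (a : K) :
    ∑ x, Ψ (x ^ (1 + s * (q - 1)) + a * x) = q * (nihoLines hK s).excess a := by
  have hq := one_lt_of_card_eq_sq hK
  have hq0 : (q : R) ≠ 0 := Nat.cast_ne_zero.2 (zero_lt_one.trans hq).ne'
  have hq1 : (q : R) - 1 ≠ 0 := sub_ne_zero.2 (Nat.cast_ne_one.2 hq.ne')
  have hcount := (sum_sum_addChar_niho_eq_add hK Ψ s a).symm.trans
    (sum_sum_addChar_niho hK hΨ hΨq s a)
  rw [← add_sum_erase _ _ (mem_univ 0), zero_zpow _ hs, mul_zero, add_zero, Ψ.map_zero_eq_one]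
  refine mul_left_cancel₀ (mul_ne_zero hq0 hq1) ?_
  push_cast at hcount
  linear_combination hcount

end NihoTheorem

section TraceAddChar

variable (p : ℕ) [Fact p.Prime] (K : Type) [Field K] [Algebra (ZMod p) K]

/-- `canonicalAddChar` as a bundled additive character. -/
noncomputable def traceAddChar : AddChar K ℂ :=
  ZMod.stdAddChar.compAddMonoidHom (Algebra.trace (ZMod p) K).toAddMonoidHom

theorem canonicalAddChar_eq_traceAddChar [Fintype K] : canonicalAddChar p K = traceAddChar p K := by
  ext x
  rw [canonicalAddChar, traceAddChar, AddChar.compAddMonoidHom_apply, ZMod.stdAddChar_apply,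
    ZMod.toCircle_apply]
  rfl

theorem traceAddChar_ne_one [Finite K] : traceAddChar p K ≠ 1 := by
  intro h
  obtain ⟨x, hx⟩ := Algebra.trace_surjective (ZMod p) K 1
  have hstd : ZMod.stdAddChar (Algebra.trace (ZMod p) K x) = (1 : ℂ) := DFunLike.congr_fun h x
  rw [hx, ← (ZMod.stdAddChar (N := p)).map_zero_eq_one, ZMod.injective_stdAddChar.eq_iff] at hstd
  exact one_ne_zero hstd

variable {K}

theorem traceAddChar_pow_char_pow [Finite K] (k : ℕ) (x : K) :
    traceAddChar p K (x ^ p ^ k) = traceAddChar p K x := by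
  induction k with
  | zero => rw [pow_zero, pow_one]
  | succ k ih =>
    rw [pow_succ, pow_mul, ← ih]
    have h := Algebra.trace_eq_of_algEquiv
      (FiniteField.frobeniusAlgEquivOfAlgebraic (ZMod p) K) (x ^ p ^ k)
    rw [FiniteField.coe_frobeniusAlgEquivOfAlgebraic, ZMod.card] at h
    exact congrArg ZMod.stdAddChar h

theorem weilSum_mul_char_pow [Fintype K] (d : ℤ) (k : ℕ) (a : K) :
    weilSum p K (d * p ^ k) a = weilSum p K d a := by
  refine sum_congr rfl fun x _ ↦ ?_
  rw [canonicalAddChar_eq_traceAddChar, AddChar.map_add_eq_mul, AddChar.map_add_eq_mul,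
    ← traceAddChar_pow_char_pow p k (x ^ d), zpow_mul, ← Nat.cast_pow, zpow_natCast]

theorem weilSum_niho [Fintype K] [CharP K p] {q : ℕ} (hK : Fintype.card K = q ^ 2) {s : ℤ}
    (hs : 1 + s * (q - 1) ≠ 0) (a : K) :
    weilSum p K (1 + s * (q - 1)) a = q * (nihoLines hK s).excess a := by
  obtain ⟨r, -, hr⟩ := exists_eq_pow_of_card_eq_sq p hK
  rw [weilSum, canonicalAddChar_eq_traceAddChar]
  exact sum_addChar_niho hK (traceAddChar_ne_one p K)
    (fun x ↦ hr ▸ traceAddChar_pow_char_pow p r x) hs a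

end TraceAddChar

section DegenerateExponents

variable {p q r : ℕ} {d : ℤ}

theorem IsDegenerate.exists_mul_pow_eq (h : IsDegenerate p q d) (hr : r ≠ 0) (hq : q = p ^ r) :
    ∃ (k : ℕ) (s : ℤ), d * p ^ k = 1 + s * (q - 1) := by
  obtain ⟨j, hj⟩ := h
  have hone : (q : ℤ) ^ j ≡ 1 [ZMOD q - 1] := by
    simpa using ((Int.modEq_sub (q : ℤ) 1).pow j)
  have hpow : (p : ℤ) ^ j * p ^ (j * (r - 1)) = q ^ j := by
    rw [hq, Nat.cast_pow, ← pow_add, ← pow_mul, mul_comm r, add_comm, ← Nat.mul_succ,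
      Nat.succ_eq_add_one, Nat.sub_add_cancel (Nat.one_le_iff_ne_zero.2 hr)]
  have hmod := hj.mul_right ((p : ℤ) ^ (j * (r - 1)))
  rw [hpow] at hmod
  obtain ⟨s, hs⟩ := Int.modEq_iff_dvd.1 (hmod.trans hone).symm
  exact ⟨j * (r - 1), s, by linear_combination hs⟩

theorem isCoprime_mul_pow_sq_sub_one (hr : r ≠ 0) (hq : q = p ^ r)
    (hd : IsCoprime d ((q : ℤ) ^ 2 - 1)) (k : ℕ) : IsCoprime (d * p ^ k) ((q : ℤ) ^ 2 - 1) := by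
  refine hd.mul_left (IsCoprime.pow_left ?_)
  obtain ⟨t, ht⟩ : p ∣ q := hq ▸ dvd_pow_self p hr
  exact ⟨t * q, -1, by rw [ht]; push_cast; ring⟩

theorem ne_zero_of_isCoprime_sq_sub_one (hq : q ≠ 0) (h : IsCoprime d ((q : ℤ) ^ 2 - 1)) :
    d ≠ 0 := by
  rintro rfl
  have hsplit : (q : ℤ) ^ 2 - 1 = (q + 1) * (q - 1) := by ring
  rw [isCoprime_zero_left, hsplit] at h
  have hunit := Int.isUnit_iff.1 (isUnit_of_mul_isUnit_left h)
  omega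

theorem isCoprime_two_mul_sub_one {s : ℤ} (h : IsCoprime (1 + s * (q - 1)) ((q : ℤ) ^ 2 - 1)) :
    IsCoprime (2 * s - 1) ((q : ℤ) + 1) := by
  have hsplit : (q : ℤ) ^ 2 - 1 = (q + 1) * (q - 1) := by ring
  rw [hsplit] at h
  have hneg := (h.of_mul_right_left.add_mul_right_left (-s)).neg_left
  have hlin : -(1 + s * (q - 1) + -s * (q + 1)) = 2 * s - 1 := by ring
  exact hlin ▸ hneg

end DegenerateExponents

theorem stmt7 (p : ℕ) [Fact p.Prime] (K : Type) [Field K] [Fintype K] [CharP K p]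
    [Algebra (ZMod p) K]
    (q : ℕ) (hq : Fintype.card K = q ^ 2)
    (d : ℤ) (hd : Int.gcd d ((Fintype.card K : ℤ) - 1) = 1)
    (hniho : IsDegenerate p q d) :
    (weilValues p K d).ncard ≠ 3 := by
  obtain ⟨r, hr, hqr⟩ := exists_eq_pow_of_card_eq_sq p hq
  obtain ⟨k, s, hs⟩ := hniho.exists_mul_pow_eq hr hqr
  have hq0 : q ≠ 0 := (zero_lt_one.trans (one_lt_of_card_eq_sq hq)).ne'
  rw [hq, Nat.cast_pow, ← Int.isCoprime_iff_gcd_eq_one] at hd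
  have hcop := isCoprime_mul_pow_sq_sub_one hr hqr hd k
  rw [hs] at hcop
  have hs0 := ne_zero_of_isCoprime_sq_sub_one hq0 hcop
  have hvalues : weilValues p K d =
      (fun m : ℤ ↦ (q * m : ℂ)) '' ((nihoLines hq s).excess '' {0}ᶜ) := by
    rw [Set.image_image]
    refine Set.ext fun w ↦ exists_congr fun a ↦ and_congr_right fun _ ↦ ?_
    rw [← weilSum_mul_char_pow p d k, hs, weilSum_niho p hq hs0]
  have hinj : Function.Injective fun m : ℤ ↦ (q * m : ℂ) :=
    (mul_right_injective₀ (Nat.cast_ne_zero.2 hq0)).comp Int.cast_injective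
  rw [hvalues, Set.ncard_image_of_injective _ hinj]
  exact ncard_excess_nihoLines_ne_three hq (isCoprime_two_mul_sub_one hcop)
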